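/- Let f : ℝⁿ → ℝⁿ be a bijective L-bilipschitz map (L ≥ 1) and let D ⊊ ℝⁿ be a domain. Then for all x, y ∈ D: (1/L²) τ̃_D(x,y) ≤ τ̃_{f(D)}(f(x), f(y)) ≤ L² τ̃_D(x,y). In particular, the distortion constant L² is independent of the dimension n. -/

import Mathlib

/-!
Since `f` is a homeomorphism, `f` maps `∂D` onto `∂(f(D))`. For `p ∈ ∂D` the numerator `|x − y|`
grows by a factor at most `L` and the denominator `√(|x − p| |p − y|)` shrinks by a factor at
most `L`, so the suprema satisfy `S' ≤ L² S`. Bernoulli's inequality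
`1 + L² S ≤ (1 + S) ^ (L²)` then gives the upper bound (`scTau_image_le`). The lower bound is the
upper bound for `f⁻¹`, which satisfies the same hypotheses, applied to the domain `f(D)`.
-/


open Metric Set

/-- The scale invariant Cassinian metric
`τ̃_D(x,y) = log(1 + sup_{p ∈ ∂D} |x−y|/√(|x−p||p−y|))`. -/
noncomputable def scTau {n : ℕ} (D : Set (EuclideanSpace ℝ (Fin n)))
    (x y : EuclideanSpace ℝ (Fin n)) : ℝ :=
  Real.log (1 + sSup ((fun p => dist x y / Real.sqrt (dist x p * dist p y)) '' frontier D))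

/-- The ratios are bounded, because boundary points of an open set stay at a positive
distance from each of its points. -/
lemma bddAbove_scTau {n : ℕ} {D : Set (EuclideanSpace ℝ (Fin n))} (hD : IsOpen D)
    {x y : EuclideanSpace ℝ (Fin n)} (hx : x ∈ D) (hy : y ∈ D) :
    BddAbove ((fun p => dist x y / Real.sqrt (dist x p * dist p y)) '' frontier D) := by
  obtain ⟨r, hr, hxr⟩ := Metric.isOpen_iff.1 hD x hx
  obtain ⟨s, hs, hys⟩ := Metric.isOpen_iff.1 hD y hy
  refine ⟨dist x y / Real.sqrt (r * s), ?_⟩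
  rintro _ ⟨p, hp, rfl⟩
  have hpD : p ∉ D := by
    rw [hD.frontier_eq] at hp
    exact hp.2
  have h1 : r ≤ dist x p := by
    by_contra! h
    exact hpD (hxr (by rwa [mem_ball, dist_comm]))
  have h2 : s ≤ dist p y := by
    by_contra! h
    exact hpD (hys h)
  have h3 : 0 < Real.sqrt (r * s) := Real.sqrt_pos.2 (mul_pos hr hs)
  dsimp only
  gcongr

/-- The upper bound, for a homeomorphism. -/
lemma scTau_image_le {n : ℕ} {L : ℝ} (hL : 1 ≤ L)
    (e : EuclideanSpace ℝ (Fin n) ≃ₜ EuclideanSpace ℝ (Fin n))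
    (hlow : ∀ x y, dist x y ≤ L * dist (e x) (e y))
    (hup : ∀ x y, dist (e x) (e y) ≤ L * dist x y)
    {D : Set (EuclideanSpace ℝ (Fin n))} (hD : IsOpen D)
    {x y : EuclideanSpace ℝ (Fin n)} (hx : x ∈ D) (hy : y ∈ D) :
    scTau (e '' D) (e x) (e y) ≤ L ^ 2 * scTau D x y := by
  have hL0 : 0 < L := by linarith
  unfold scTau
  set S := sSup ((fun p => dist x y / Real.sqrt (dist x p * dist p y)) '' frontier D)
  have hS0 : 0 ≤ S := Real.sSup_nonneg (by rintro _ ⟨p, -, rfl⟩; positivity)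
  rw [← e.image_frontier]
  set T := sSup ((fun p => dist (e x) (e y) / Real.sqrt (dist (e x) p * dist p (e y))) ''
    (e '' frontier D))
  have hT0 : 0 ≤ T := Real.sSup_nonneg (by rintro _ ⟨p, -, rfl⟩; positivity)
  have hTS : T ≤ L ^ 2 * S := by
    refine Real.sSup_le ?_ (by positivity)
    rintro _ ⟨_, ⟨p, hp, rfl⟩, rfl⟩
    have hpS : dist x y / Real.sqrt (dist x p * dist p y) ≤ S :=
      le_csSup (bddAbove_scTau hD hx hy) ⟨p, hp, rfl⟩
    have hpD : p ∉ D := by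
      rw [hD.frontier_eq] at hp
      exact hp.2
    have hxp : 0 < dist x p := dist_pos.2 (by rintro rfl; exact hpD hx)
    have hpy : 0 < dist p y := dist_pos.2 (by rintro rfl; exact hpD hy)
    have hden : Real.sqrt (dist x p * dist p y) ≤
        L * Real.sqrt (dist (e x) (e p) * dist (e p) (e y)) := by
      rw [← Real.sqrt_sq hL0.le, ← Real.sqrt_mul (by positivity)]
      apply Real.sqrt_le_sqrt
      calc dist x p * dist p y
          ≤ (L * dist (e x) (e p)) * (L * dist (e p) (e y)) := by
            gcongr <;> apply hlow
        _ = L ^ 2 * (dist (e x) (e p) * dist (e p) (e y)) := by ring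
    have hq : 0 < Real.sqrt (dist x p * dist p y) := Real.sqrt_pos.2 (mul_pos hxp hpy)
    have hq' : 0 < Real.sqrt (dist (e x) (e p) * dist (e p) (e y)) :=
      pos_of_mul_pos_right (hq.trans_le hden) hL0.le
    rw [div_le_iff₀ hq] at hpS
    dsimp only
    rw [div_le_iff₀ hq']
    calc dist (e x) (e y) ≤ L * dist x y := hup x y
      _ ≤ L * (S * (L * Real.sqrt (dist (e x) (e p) * dist (e p) (e y)))) := by
        gcongr
        exact hpS.trans (by gcongr)
      _ = L ^ 2 * S * Real.sqrt (dist (e x) (e p) * dist (e p) (e y)) := by ring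
  calc Real.log (1 + T) ≤ Real.log ((1 + S) ^ (L ^ 2)) := by
        apply Real.log_le_log (by linarith)
        have := one_add_mul_self_le_rpow_one_add (s := S) (by linarith) (one_le_pow₀ hL (n := 2))
        linarith
    _ = L ^ 2 * Real.log (1 + S) := Real.log_rpow (by linarith) _

/-- A bijective `L`-bilipschitz map of `ℝⁿ` distorts the scale invariant Cassinian metric
of a domain `D ⊊ ℝⁿ` by at most the factor `L²` (independent of the dimension `n`):
`(1/L²) τ̃_D(x,y) ≤ τ̃_{f(D)}(f x, f y) ≤ L² τ̃_D(x,y)`. -/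
theorem stmt_14 (n : ℕ) (L : ℝ) (hL : 1 ≤ L)
    (f : EuclideanSpace ℝ (Fin n) → EuclideanSpace ℝ (Fin n))
    (hbij : Function.Bijective f)
    (hlow : ∀ x y, (1 / L) * dist x y ≤ dist (f x) (f y))
    (hup : ∀ x y, dist (f x) (f y) ≤ L * dist x y)
    (D : Set (EuclideanSpace ℝ (Fin n)))
    (hDopen : IsOpen D) (hDconn : IsConnected D) (hDne : D ≠ univ)
    (x y : EuclideanSpace ℝ (Fin n)) (hx : x ∈ D) (hy : y ∈ D) :
    (1 / L ^ 2) * scTau D x y ≤ scTau (f '' D) (f x) (f y) ∧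
    scTau (f '' D) (f x) (f y) ≤ L ^ 2 * scTau D x y := by
  have hL0 : 0 < L := by linarith
  have hlow' : ∀ x y, dist x y ≤ L * dist (f x) (f y) := fun x y => by
    have := hlow x y
    rwa [one_div, inv_mul_le_iff₀ hL0] at this
  let g := Equiv.ofBijective f hbij
  have hinv : ∀ x y, dist (g.symm x) (g.symm y) ≤ L * dist x y := fun x y => by
    have := hlow' (g.symm x) (g.symm y)
    rwa [show f (g.symm x) = x from g.apply_symm_apply x,
      show f (g.symm y) = y from g.apply_symm_apply y] at this
  let e : EuclideanSpace ℝ (Fin n) ≃ₜ EuclideanSpace ℝ (Fin n) :=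
    { g with
      continuous_toFun := (LipschitzWith.of_dist_le_mul (K := ⟨L, hL0.le⟩) hup).continuous
      continuous_invFun := (LipschitzWith.of_dist_le_mul (K := ⟨L, hL0.le⟩) hinv).continuous }
  refine ⟨?_, scTau_image_le hL e hlow' hup hDopen hx hy⟩
  have hlow_inv : ∀ x y, dist x y ≤ L * dist (e.symm x) (e.symm y) := fun x y => by
    have := hup (e.symm x) (e.symm y)
    rwa [show f (e.symm x) = x from e.apply_symm_apply x,
      show f (e.symm y) = y from e.apply_symm_apply y] at this
  have h := scTau_image_le hL e.symm hlow_inv hinv (e.isOpenMap D hDopen)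
    (mem_image_of_mem e hx) (mem_image_of_mem e hy)
  rw [← image_comp, e.symm_comp_self, image_id, e.symm_apply_apply, e.symm_apply_apply] at h
  rw [one_div, inv_mul_le_iff₀ (by positivity)]
  exact h
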